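/- Let G be a group and 𝓕 a family of subgroups of G closed under conjugation and containing only finitely many subgroups of each fixed index. For an integer n ≥ 1, let I_n be the number of conjugacy classes of subgroups H ∈ 𝓕 of index n in G, and for a finite group Q let T_n(Q) be the number of pairs (H, J) with H ∈ 𝓕 of index n in G, H ≤ J ≤ G, H normal in J, and J/H ≅ Q. Then I_n = (1/n) · Σ_{d | n} φ(d) · T_n(C_d), where C_d is the cyclic group of order d and φ is Euler's totient function. -/

import Mathlib

/-- The conjugacy class of a subgroup. -/
def cls {G : Type*} [Group G] (H : Subgroup G) : Set (Subgroup G) :=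
  {K | ∃ g : G, K = H.map (MulAut.conj g).toMonoidHom}

open Pointwise in
theorem cls_eq_orbit {G : Type*} [Group G] (H : Subgroup G) :
    cls H = @MulAction.orbit G _ (MulAction.compHom (Subgroup G)
      (MulAut.conj : G →* MulAut G)).toSMul H := by
  letI := MulAction.compHom (Subgroup G) (MulAut.conj : G →* MulAut G)
  ext K
  constructor
  · rintro ⟨g, rfl⟩
    exact ⟨g, rfl⟩
  · rintro ⟨g, rfl⟩
    exact ⟨g, rfl⟩

theorem mem_cls_self {G : Type*} [Group G] (H : Subgroup G) : H ∈ cls H := by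
  rw [cls_eq_orbit]; exact @MulAction.mem_orbit_self G _ _ (_) H

theorem cls_eq_iff {G : Type*} [Group G] (H K : Subgroup G) : cls K = cls H ↔ K ∈ cls H := by
  rw [cls_eq_orbit, cls_eq_orbit]
  exact @MulAction.orbit_eq_iff G _ _ (_) _ _

open Pointwise in
theorem ncard_cls {G : Type*} [Group G] (H : Subgroup G) :
    (cls H).ncard = (Subgroup.normalizer (H : Set G)).index := by
  rw [cls_eq_orbit]
  letI := MulAction.compHom (Subgroup G) (MulAut.conj : G →* MulAut G)
  have : Subgroup.normalizer (H : Set G) = MulAction.stabilizer G H := by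
    ext g
    rw [Subgroup.mem_normalizer_iff_map_conj_eq]
    rfl
  rw [this]
  exact (MulAction.index_stabilizer G H).symm

theorem index_cls {G : Type*} [Group G] {H K : Subgroup G} (h : K ∈ cls H) :
    K.index = H.index := by
  obtain ⟨g, rfl⟩ := h
  exact Subgroup.index_map_equiv H (MulAut.conj g)

theorem sum_cls {G : Type*} [Group G] (X : Finset (Subgroup G)) (n : ℕ) (hn : 1 ≤ n)
    (hX : ∀ H ∈ X, H.index = n) (hc : ∀ H ∈ X, ∀ K ∈ cls H, K ∈ X) :
    n * (cls '' (X : Set (Subgroup G))).ncard =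
      ∑ H ∈ X, H.relIndex (Subgroup.normalizer (H : Set G)) := by
  classical
  rw [← Finset.coe_image, Set.ncard_coe_finset,
    ← Finset.sum_fiberwise_of_maps_to (fun x hx => Finset.mem_image_of_mem cls hx), mul_comm,
    ← smul_eq_mul, ← Finset.sum_const]
  refine Finset.sum_congr rfl ?_
  intro S hS
  obtain ⟨H, hH, rfl⟩ := Finset.mem_image.1 hS
  have hset : ((X.filter (fun K => cls K = cls H) : Finset _) : Set (Subgroup G)) = cls H := by
    ext K
    simp only [Finset.coe_filter, Set.mem_ofPred_eq, cls_eq_iff]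
    exact ⟨fun h => h.2, fun h => ⟨hc H hH K h, h⟩⟩
  have hcard := congrArg Set.ncard hset
  rw [Set.ncard_coe_finset] at hcard
  have key : ∀ K ∈ X.filter (fun K => cls K = cls H),
      K.relIndex (Subgroup.normalizer (K : Set G)) * (cls H).ncard = n := by
    intro K hK
    rw [Finset.mem_filter] at hK
    rw [← hK.2, ncard_cls, Subgroup.relIndex_mul_index Subgroup.le_normalizer, hX K hK.1]
  have hpos : 0 < (cls H).ncard := by
    have := key H (by simp [hH])
    apply Nat.pos_of_ne_zero
    intro h0
    rw [h0] at this
    omega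
  apply Nat.eq_of_mul_eq_mul_right hpos
  rw [Finset.sum_mul, Finset.sum_congr rfl key, Finset.sum_const, hcard, smul_eq_mul, mul_comm]

theorem card_gen {Q : Type*} [Group Q] [Fintype Q] [DecidableEq (Subgroup Q)] (C : Subgroup Q)
    (hC : IsCyclic C) :
    (Finset.univ.filter (fun x : Q => Subgroup.zpowers x = C)).card = (Nat.card C).totient := by
  classical
  have : Fintype C := Fintype.ofFinite C
  rw [← IsCyclic.card_orderOf_eq_totient (α := C) (by rw [Nat.card_eq_fintype_card])]
  symm
  refine Finset.card_bij (fun x _ => (x : Q)) ?_ ?_ ?_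
  · intro x hx
    simp only [Finset.mem_filter, Finset.mem_univ, true_and] at hx ⊢
    apply Subgroup.eq_of_le_of_card_ge
    · simp
    · rw [Nat.card_zpowers, ← hx, Subgroup.orderOf_coe]
  · intro x _ y _ h
    exact Subtype.ext h
  · intro y hy
    simp only [Finset.mem_filter, Finset.mem_univ, true_and] at hy
    refine ⟨⟨y, hy ▸ Subgroup.mem_zpowers y⟩, ?_, rfl⟩
    simp only [Finset.mem_filter, Finset.mem_univ, true_and]
    rw [Subgroup.orderOf_mk, ← Nat.card_zpowers, hy]

theorem cyc {Q : Type*} [Group Q] [Finite Q] (m : ℕ) (hm : m ≠ 0) (hQ : Nat.card Q ∣ m) :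
    Nat.card Q = ∑ d ∈ m.divisors,
      d.totient * Nat.card {C : Subgroup Q // IsCyclic C ∧ Nat.card C = d} := by
  classical
  have : Fintype Q := Fintype.ofFinite Q
  have : Fintype (Subgroup Q) := Fintype.ofFinite _
  have h1 : Nat.card Q = ∑ C ∈ Finset.univ.filter (fun C : Subgroup Q => IsCyclic C),
      (Nat.card C).totient := by
    rw [Nat.card_eq_fintype_card, ← Finset.card_univ,
      Finset.card_eq_sum_card_fiberwise (f := fun x : Q => Subgroup.zpowers x)
        (t := Finset.univ.filter (fun C : Subgroup Q => IsCyclic C))]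
    · refine Finset.sum_congr rfl ?_
      intro C hC
      exact card_gen C (Finset.mem_filter.1 hC).2
    · intro x _
      simp only [Finset.coe_filter, Finset.mem_univ, true_and, Set.mem_ofPred_eq]
      infer_instance
  rw [h1, ← Finset.sum_fiberwise_of_maps_to (t := m.divisors) (g := fun C : Subgroup Q => Nat.card C)]
  · refine Finset.sum_congr rfl ?_
    intro d _
    rw [Finset.sum_congr rfl (g := fun _ => d.totient), Finset.sum_const, smul_eq_mul, mul_comm]
    · congr 1
      rw [Nat.card_eq_fintype_card, Fintype.card_subtype, Finset.filter_filter]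
    · intro C hC
      rw [(Finset.mem_filter.1 hC).2]
  · intro C _
    exact Nat.mem_divisors.2 ⟨(Subgroup.card_subgroup_dvd_card C).trans hQ, hm⟩

/-- The map from `J` to the quotient. -/
def psi {G : Type*} [Group G] (H J : Subgroup G) (h : J ≤ Subgroup.normalizer (H : Set G)) :
    J →* (Subgroup.normalizer (H : Set G) ⧸ H.subgroupOf (Subgroup.normalizer (H : Set G))) :=
  (QuotientGroup.mk' _).comp (Subgroup.inclusion h)

theorem ker_psi {G : Type*} [Group G] (H J : Subgroup G)
    (h : J ≤ Subgroup.normalizer (H : Set G)) : (psi H J h).ker = H.subgroupOf J := by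
  ext x
  rw [MonoidHom.mem_ker, psi, MonoidHom.comp_apply, QuotientGroup.mk'_apply,
    QuotientGroup.eq_one_iff, Subgroup.mem_subgroupOf, Subgroup.mem_subgroupOf]
  rfl

/-- The condition on `J`. -/
def good {G : Type*} [Group G] (H : Subgroup G) (d : ℕ) (J : Subgroup G) : Prop :=
  H ≤ J ∧ ∃ φ : J →* Multiplicative (ZMod d),
        Function.Surjective φ ∧ φ.ker = H.subgroupOf J

theorem good_le {G : Type*} [Group G] {H : Subgroup G} {d : ℕ} {J : Subgroup G}
    (h : good H d J) : J ≤ Subgroup.normalizer (H : Set G) := by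
  obtain ⟨h1, φ, -, h3⟩ := h
  rw [← Subgroup.normal_subgroupOf_iff_le_normalizer h1, ← h3]
  infer_instance

theorem mem_iff {G : Type*} [Group G] {H J : Subgroup G}
    (h : J ≤ Subgroup.normalizer (H : Set G)) (hHJ : H ≤ J)
    (x : Subgroup.normalizer (H : Set G)) :
    (x : Subgroup.normalizer (H : Set G) ⧸ H.subgroupOf (Subgroup.normalizer (H : Set G))) ∈
      (psi H J h).range ↔ (x : G) ∈ J := by
  constructor
  · rintro ⟨y, hy⟩
    have hy' : ((Subgroup.inclusion h y : Subgroup.normalizer (H : Set G)) :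
      Subgroup.normalizer (H : Set G) ⧸ H.subgroupOf (Subgroup.normalizer (H : Set G))) = x := hy
    rw [QuotientGroup.eq, Subgroup.mem_subgroupOf] at hy'
    have h2 := J.mul_mem y.2 (hHJ hy')
    simpa using h2
  · intro hx
    exact ⟨⟨x, hx⟩, rfl⟩

theorem card_good {G : Type*} [Group G] (H : Subgroup G) (d : ℕ) (hd : d ≠ 0) :
    Nat.card {J : Subgroup G // good H d J} =
      Nat.card {C : Subgroup (Subgroup.normalizer (H : Set G) ⧸
        H.subgroupOf (Subgroup.normalizer (H : Set G))) // IsCyclic C ∧ Nat.card C = d} := by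
  have : NeZero d := ⟨hd⟩
  refine Nat.card_congr (Equiv.ofBijective
    (fun J => ⟨(psi H J.1 (good_le J.2)).range, ?_⟩) ⟨?_, ?_⟩)
  · have hle := good_le J.2
    obtain ⟨J, h1, φ, h2, h3⟩ := J
    have hk : φ.ker = (psi H J hle).ker := by rw [ker_psi, h3]
    let e : (psi H J hle).range ≃* Multiplicative (ZMod d) :=
      (QuotientGroup.quotientKerEquivRange (psi H J hle)).symm.trans
        ((QuotientGroup.quotientMulEquivOfEq hk.symm).trans
          (QuotientGroup.quotientKerEquivOfSurjective φ h2))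
    refine ⟨isCyclic_of_surjective e.symm e.symm.surjective, ?_⟩
    rw [Nat.card_congr e.toEquiv]
    exact Nat.card_zmod d
  · rintro ⟨J, hJ⟩ ⟨K, hK⟩ h
    have h' : (psi H J (good_le hJ)).range = (psi H K (good_le hK)).range := congrArg Subtype.val h
    apply Subtype.ext
    ext x
    constructor
    · intro hx
      rw [← mem_iff (good_le hK) hK.1 ⟨x, good_le hJ hx⟩, ← h', mem_iff (good_le hJ) hJ.1]
      exact hx
    · intro hx
      rw [← mem_iff (good_le hJ) hJ.1 ⟨x, good_le hK hx⟩, h', mem_iff (good_le hK) hK.1]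
      exact hx
  · rintro ⟨C, hC, hCd⟩
    let J : Subgroup G := (C.comap (QuotientGroup.mk' _)).map
      (Subgroup.normalizer (H : Set G)).subtype
    have hJ : J ≤ Subgroup.normalizer (H : Set G) := Subgroup.map_subtype_le _
    have hHJ : H ≤ J := by
      intro x hx
      refine ⟨⟨x, Subgroup.le_normalizer hx⟩, ?_, rfl⟩
      have : ((⟨x, Subgroup.le_normalizer hx⟩ : Subgroup.normalizer (H : Set G)) :
        Subgroup.normalizer (H : Set G) ⧸ H.subgroupOf (Subgroup.normalizer (H : Set G))) = 1 := by
        rw [QuotientGroup.eq_one_iff, Subgroup.mem_subgroupOf]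
        exact hx
      change ((⟨x, Subgroup.le_normalizer hx⟩ : Subgroup.normalizer (H : Set G)) :
        Subgroup.normalizer (H : Set G) ⧸ H.subgroupOf (Subgroup.normalizer (H : Set G))) ∈ C
      rw [this]
      exact C.one_mem
    have hr : (psi H J hJ).range = C := by
      ext q
      obtain ⟨x, rfl⟩ := QuotientGroup.mk_surjective q
      rw [mem_iff hJ hHJ]
      constructor
      · rintro ⟨y, hy, hyx⟩
        have : y = x := Subtype.ext hyx
        exact this ▸ hy
      · intro hx
        exact ⟨x, hx, rfl⟩
    have hg : good H d J := by
      refine ⟨hHJ, ?_⟩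
      have : IsCyclic (psi H J hJ).range := by rw [hr]; exact hC
      let e : (psi H J hJ).range ≃* Multiplicative (ZMod d) :=
        mulEquivOfCyclicCardEq (by rw [hr, hCd]; exact (Nat.card_zmod d).symm)
      refine ⟨e.toMonoidHom.comp (psi H J hJ).rangeRestrict, ?_, ?_⟩
      · exact e.surjective.comp (psi H J hJ).rangeRestrict_surjective
      · rw [← ker_psi H J hJ]
        refine Eq.trans ?_ (MonoidHom.ker_rangeRestrict (psi H J hJ))
        ext x
        exact e.map_eq_one_iff
    exact ⟨⟨J, hg⟩, Subtype.ext hr⟩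

theorem sum_good {G : Type*} [Group G] (H : Subgroup G) (n : ℕ) (hn : 1 ≤ n) (h : H.index = n) :
    H.relIndex (Subgroup.normalizer (H : Set G)) =
      ∑ d ∈ n.divisors, d.totient * Nat.card {J : Subgroup G // good H d J} := by
  have h1 := Subgroup.relIndex_mul_index (H := H) Subgroup.le_normalizer
  have h2 : Nat.card (Subgroup.normalizer (H : Set G) ⧸
      H.subgroupOf (Subgroup.normalizer (H : Set G))) =
      H.relIndex (Subgroup.normalizer (H : Set G)) := rfl
  have h3 : H.relIndex (Subgroup.normalizer (H : Set G)) ≠ 0 := by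
    intro h0
    rw [h0] at h1
    omega
  have : Finite (Subgroup.normalizer (H : Set G) ⧸
      H.subgroupOf (Subgroup.normalizer (H : Set G))) := Nat.finite_of_card_ne_zero (by rw [h2]; exact h3)
  rw [← h2, cyc n (by omega) (by rw [h2, ← h, ← h1]; exact dvd_mul_right _ _)]
  refine Finset.sum_congr rfl ?_
  intro d hd
  rw [card_good H d (Nat.pos_of_mem_divisors hd).ne']

theorem finite_good {G : Type*} [Group G] (H : Subgroup G) (h : H.index ≠ 0) (d : ℕ) :
    Finite {J : Subgroup G // good H d J} := by
  have : H.FiniteIndex := ⟨h⟩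
  have hf : Finite (G ⧸ H) := Subgroup.finite_quotient_of_finiteIndex
  have key : ∀ J : {J : Subgroup G // good H d J}, ∀ x : G,
      x ∈ J.1 ↔ (x : G ⧸ H) ∈ (fun y : G => (y : G ⧸ H)) '' (J.1 : Set G) := by
    intro J x
    constructor
    · intro hx
      exact ⟨x, hx, rfl⟩
    · rintro ⟨y, hy, hyx⟩
      have h2 := J.1.mul_mem hy (J.2.1 (QuotientGroup.eq.1 hyx))
      simpa using h2
  refine Finite.of_injective (β := Set (G ⧸ H))
    (fun J => (fun y : G => (y : G ⧸ H)) '' (J.1 : Set G)) ?_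
  intro J K hJK
  apply Subtype.ext
  ext x
  rw [key J, key K]
  exact Set.ext_iff.1 hJK _
/-- For a group `G` and a conjugation-closed family `F` of subgroups with
finitely many members of each index, the number `I` of conjugacy classes of members of `F`
of index `n` satisfies `n * I = ∑_{d ∣ n} φ(d) * T d`, where `T d` counts pairs
`H ⊴ J ≤ G` with `H ∈ F` of index `n` in `G` and `J/H ≅ C_d` (encoded as: there is a
surjective homomorphism `J →* C_d` with kernel `H`). -/
theorem stmt_0 {G : Type*} [Group G] (F : Set (Subgroup G))
    (hconj : ∀ H ∈ F, ∀ g : G, H.map (MulAut.conj g).toMonoidHom ∈ F)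
    (hfin : ∀ m : ℕ, {H : Subgroup G | H ∈ F ∧ H.index = m}.Finite)
    (n : ℕ) (hn : 1 ≤ n)
    (I : ℕ)
    (hI : I = Nat.card {S : Set (Subgroup G) | ∃ H, H ∈ F ∧ H.index = n ∧
      S = {K | ∃ g : G, K = H.map (MulAut.conj g).toMonoidHom}})
    (T : ℕ → ℕ)
    (hT : ∀ d : ℕ, T d = Nat.card {HJ : Subgroup G × Subgroup G |
      HJ.1 ∈ F ∧ HJ.1.index = n ∧ HJ.1 ≤ HJ.2 ∧
      ∃ φ : HJ.2 →* Multiplicative (ZMod d),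
        Function.Surjective φ ∧ φ.ker = HJ.1.subgroupOf HJ.2}) :
    n * I = ∑ d ∈ n.divisors, d.totient * T d := by
  classical
  set X : Finset (Subgroup G) := (hfin n).toFinset with hX
  have memX : ∀ H, H ∈ X ↔ H ∈ F ∧ H.index = n := by
    intro H
    simp [hX]
  have hI' : I = (cls '' (X : Set (Subgroup G))).ncard := by
    rw [hI, ← Nat.card_coe_set_eq]
    congr 2
    ext S
    constructor
    · rintro ⟨H, h1, h2, rfl⟩
      exact ⟨H, (memX H).2 ⟨h1, h2⟩, rfl⟩
    · rintro ⟨H, h1, rfl⟩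
      have := (memX H).1 h1
      exact ⟨H, this.1, this.2, rfl⟩
  have hT' : ∀ d, T d = ∑ H ∈ X, Nat.card {J : Subgroup G // good H d J} := by
    intro d
    have : ∀ H : X, Finite {J : Subgroup G // good H.1 d J} := by
      intro H
      apply finite_good
      have := ((memX H.1).1 H.2).2
      omega
    rw [hT d, ← Finset.sum_coe_sort X (fun H => Nat.card {J : Subgroup G // good H d J}),
      ← Nat.card_sigma]
    refine Nat.card_congr ⟨fun p => ⟨⟨p.1.1, (memX _).2 ⟨p.2.1, p.2.2.1⟩⟩, ⟨p.1.2, p.2.2.2⟩⟩,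
      fun q => ⟨(q.1.1, q.2.1), ((memX _).1 q.1.2).1, ((memX _).1 q.1.2).2, q.2.2⟩, ?_, ?_⟩
    · intro p; rfl
    · intro q; rfl
  rw [hI', sum_cls X n hn (fun H hH => ((memX H).1 hH).2)]
  · simp_rw [hT', Finset.mul_sum]
    rw [Finset.sum_comm]
    exact Finset.sum_congr rfl (fun H hH => sum_good H n hn ((memX H).1 hH).2)
  · intro H hH K hK
    have h1 := (memX H).1 hH
    refine (memX K).2 ⟨?_, (index_cls hK).trans h1.2⟩
    obtain ⟨g, rfl⟩ := hK
    exact hconj H h1.1 g
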